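/- In the discrete GPSSM setting with the filtering recursion, if the exact-equality hypotheses (A1) and (A2) hold, then ∑_{u,x} Q(u,x) · ∑_{t<T} Real.log ( emit (x (t+1)) (y t) · trans u (x t) (x (t+1)) / qtrans t u (x t) (x (t+1)) ) = ∑_u qU u · Real.log (M u); that is, the difference between the reconstruction term and the transition-regularization term of the ELBO equals the qU-expected log marginal likelihood of the observations given the inducing outputs. (Paper's Lemma 1, with the paper's two approximations taken as exact equalities.) -/

import Mathlib

/-!
Since the filtering distribution is strictly positive, it cancels from (A1), so the one-step
predictive likelihood `∑ x, trans u x' x * emit x (y t)` does not depend on the current state `x'`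
and equals the normalization constant `c u t`. Two consequences follow.

* By (A2), every ratio `emit * trans / qtrans` is the constant `c u t`, so the logarithmic sum is
  `∑ t, log (c u t)` on every trajectory, and averaging over the trajectories leaves it unchanged.
* The kernel `trans * emit` has all row sums equal to `c u t`, so the marginal likelihood is
  `∏ t, c u t`.

Both total masses over trajectories are instances of `sum_path_prod`: a path weight built from
kernels with constant row sums has total mass equal to the initial mass times the product of the
row sums.
-/

open Finset

/-- Per-step observation likelihood `ℓ t x = emit x (y t)` (for `t < T`),
extended arbitrarily (by `1`) beyond the horizon `T`, where it is never used. -/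
noncomputable def obsLik {X Y : Type} (T : ℕ) (y : Fin T → Y) (emit : X → Y → ℝ)
    (t : ℕ) (x : X) : ℝ :=
  if h : t < T then emit x (y ⟨t, h⟩) else 1

/-- The normalized filtering recursion:
`filt 0 = p0`, and
`filt (t+1) x = (∑ x', filt t x' * trans x' x) * ℓ t x / c t`,
where `c t = ∑ x, (∑ x', filt t x' * trans x' x) * ℓ t x` is the per-step
normalization constant. -/
noncomputable def filt {X : Type} [Fintype X] (p0 : X → ℝ) (trans : X → X → ℝ)
    (ℓ : ℕ → X → ℝ) : ℕ → X → ℝ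
  | 0 => p0
  | t + 1 => fun x =>
      (∑ x' : X, filt p0 trans ℓ t x' * trans x' x) * ℓ t x /
        ∑ x'' : X, (∑ x' : X, filt p0 trans ℓ t x' * trans x' x'') * ℓ t x''

/-- The per-step normalization constant `c t = p(y_t | y_{1:t-1})` of the
filtering recursion. -/
noncomputable def normConst {X : Type} [Fintype X] (p0 : X → ℝ) (trans : X → X → ℝ)
    (ℓ : ℕ → X → ℝ) (t : ℕ) : ℝ :=
  ∑ x : X, (∑ x' : X, filt p0 trans ℓ t x' * trans x' x) * ℓ t x

/-- If each kernel `k t` has constant row sum `c t`, the total mass of the associated path weight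
is the initial mass times `∏ t, c t`. -/
lemma sum_path_prod {X : Type} [Fintype X] {T : ℕ} (f : X → ℝ) (k : Fin T → X → X → ℝ)
    (c : Fin T → ℝ) (hk : ∀ t x, ∑ x', k t x x' = c t) :
    ∑ x : Fin (T + 1) → X, f (x 0) * ∏ t : Fin T, k t (x t.castSucc) (x t.succ)
      = (∑ x, f x) * ∏ t, c t := by
  induction T generalizing f with
  | zero =>
    simp only [univ_eq_empty, prod_empty, mul_one]
    exact (Equiv.funUnique (Fin 1) X).sum_comp f
  | succ n ih =>
    -- Integrating out the first state pushes the initial weight `f` forward along `k 0`.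
    have key := ih (fun x' => ∑ x, f x * k 0 x x') (fun t => k t.succ) (fun t => c t.succ)
      (fun t x => hk t.succ x)
    rw [← (Fin.consEquiv (fun _ : Fin (n + 2) => X)).sum_comp, Fintype.sum_prod_type, sum_comm]
    have hf : ∑ x', ∑ x, f x * k 0 x x' = (∑ x, f x) * c 0 := by
      rw [sum_comm, sum_mul]
      exact sum_congr rfl fun x _ => by rw [← mul_sum, hk]
    rw [hf] at key
    rw [Fin.prod_univ_succ c, ← mul_assoc, ← key]
    refine sum_congr rfl fun z _ => ?_
    rw [sum_mul]
    refine sum_congr rfl fun a _ => ?_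
    rw [Fin.prod_univ_succ]
    simp [Fin.consEquiv, ← Fin.succ_castSucc, mul_assoc]

lemma obsLik_pos {X Y : Type} (T : ℕ) (y : Fin T → Y) (emit : X → Y → ℝ)
    (hemit : ∀ x yy, 0 < emit x yy) (t : ℕ) (x : X) : 0 < obsLik T y emit t x := by
  unfold obsLik
  split_ifs
  · exact hemit _ _
  · exact one_pos

lemma filt_pos {X : Type} [Fintype X] [Nonempty X] (p0 : X → ℝ) (trans : X → X → ℝ)
    (ℓ : ℕ → X → ℝ) (hp0 : ∀ x, 0 < p0 x) (htrans : ∀ x x', 0 < trans x x')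
    (hℓ : ∀ t x, 0 < ℓ t x) (t : ℕ) (x : X) : 0 < filt p0 trans ℓ t x := by
  induction t generalizing x with
  | zero => exact hp0 x
  | succ n ih =>
    have h : ∀ x, 0 < (∑ x' : X, filt p0 trans ℓ n x' * trans x' x) * ℓ n x := fun x =>
      mul_pos (sum_pos (fun x' _ => mul_pos (ih x') (htrans x' x)) univ_nonempty) (hℓ n x)
    exact div_pos (h x) (sum_pos (fun x _ => h x) univ_nonempty)

lemma normConst_pos {X : Type} [Fintype X] [Nonempty X] (p0 : X → ℝ) (trans : X → X → ℝ)
    (ℓ : ℕ → X → ℝ) (hp0 : ∀ x, 0 < p0 x) (htrans : ∀ x x', 0 < trans x x')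
    (hℓ : ∀ t x, 0 < ℓ t x) (t : ℕ) : 0 < normConst p0 trans ℓ t :=
  sum_pos (fun x _ => mul_pos (sum_pos (fun x' _ =>
    mul_pos (filt_pos p0 trans ℓ hp0 htrans hℓ t x') (htrans x' x)) univ_nonempty) (hℓ t x))
    univ_nonempty

/-- **Paper's Lemma 1 (discrete GPSSM setting, with the paper's two
approximations (A1), (A2) taken as exact equalities).**
The difference between the reconstruction term and the transition-regularization
term of the ELBO equals the `qU`-expected log marginal likelihood of the
observations given the inducing outputs. -/
theorem gpssm_term1_sub_term4_eq_expected_log_marginal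
    {T : ℕ} (hT : 1 ≤ T)
    {U X Y : Type} [Fintype U] [Fintype X] [Fintype Y]
    [Nonempty U] [Nonempty X] [Nonempty Y]
    (y : Fin T → Y)
    (pU : U → ℝ) (hpU_pos : ∀ u, 0 < pU u) (hpU_sum : ∑ u, pU u = 1)
    (p0 : X → ℝ) (hp0_pos : ∀ x, 0 < p0 x) (hp0_sum : ∑ x, p0 x = 1)
    (trans : U → X → X → ℝ) (htrans_pos : ∀ u x x', 0 < trans u x x')
    (htrans_sum : ∀ u x, ∑ x', trans u x x' = 1)
    (emit : X → Y → ℝ) (hemit_pos : ∀ x yy, 0 < emit x yy)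
    (qU : U → ℝ) (hqU_pos : ∀ u, 0 < qU u) (hqU_sum : ∑ u, qU u = 1)
    (q0 : X → ℝ) (hq0_pos : ∀ x, 0 < q0 x) (hq0_sum : ∑ x, q0 x = 1)
    (qtrans : Fin T → U → X → X → ℝ)
    (hqtrans_pos : ∀ t u x x', 0 < qtrans t u x x')
    (hqtrans_sum : ∀ t u x, ∑ x', qtrans t u x x' = 1)
    -- (A1): the one-step-ahead smoothing marginal equals the filtering distribution
    (hA1 : ∀ (u : U) (t : Fin T) (x' : X),
      filt p0 (trans u) (obsLik T y emit) t x' *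
          (∑ x : X, trans u x' x * emit x (y t)) /
          normConst p0 (trans u) (obsLik T y emit) t
        = filt p0 (trans u) (obsLik T y emit) t x')
    -- (A2): the variational transition equals the exact one-step posterior conditional
    (hA2 : ∀ (t : Fin T) (u : U) (x' x : X),
      qtrans t u x' x =
        trans u x' x * emit x (y t) / ∑ x'' : X, trans u x' x'' * emit x'' (y t)) :
    -- term 1 − term 4, combined under the variational expectation
    (∑ u : U, ∑ x : Fin (T + 1) → X,
      (qU u * q0 (x 0) * ∏ t : Fin T, qtrans t u (x t.castSucc) (x t.succ)) *
        ∑ t : Fin T,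
          Real.log (emit (x t.succ) (y t) * trans u (x t.castSucc) (x t.succ) /
            qtrans t u (x t.castSucc) (x t.succ)))
    =
    -- expected log marginal likelihood  ∑_u qU u * log (M u)
    ∑ u : U, qU u *
      Real.log (∑ x : Fin (T + 1) → X,
        p0 (x 0) * ∏ t : Fin T, trans u (x t.castSucc) (x t.succ) * emit (x t.succ) (y t)) := by
  have hℓ := obsLik_pos T y emit hemit_pos
  refine sum_congr rfl fun u _ => ?_
  set c : Fin T → ℝ := fun t => normConst p0 (trans u) (obsLik T y emit) t with hc
  have hc_pos : ∀ t, 0 < c t := fun t =>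
    normConst_pos p0 (trans u) _ hp0_pos (htrans_pos u) hℓ t
  have hrow : ∀ (t : Fin T) (x' : X), ∑ x, trans u x' x * emit x (y t) = c t := by
    intro t x'
    have h := hA1 u t x'
    have hfilt := (filt_pos p0 (trans u) _ hp0_pos (htrans_pos u) hℓ t x').ne'
    rw [div_eq_iff (hc_pos t).ne'] at h
    exact mul_left_cancel₀ hfilt h
  have hratio : ∀ (t : Fin T) (x' x : X),
      emit x (y t) * trans u x' x / qtrans t u x' x = c t := by
    intro t x' x
    have h1 := (htrans_pos u x' x).ne'
    have h2 := (hemit_pos x (y t)).ne'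
    have h3 := (hc_pos t).ne'
    rw [hA2, hrow]
    field_simp
  simp only [hratio]
  rw [← sum_mul, sum_path_prod (fun x => qU u * q0 x) (fun t => qtrans t u) (fun _ => 1)
      (fun t x => hqtrans_sum t u x),
    sum_path_prod p0 (fun t x x' => trans u x x' * emit x' (y t)) c hrow,
    ← mul_sum, hq0_sum, hp0_sum, one_mul, Real.log_prod (fun t _ => (hc_pos t).ne')]
  simp
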